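/- There exists an unextendible set of 5 pairwise disjoint maximal commuting classes in U^{(9)}: five pairwise disjoint maximal commuting classes C₁,…,C₅ of two-qutrit generalized Pauli operators such that no maximal commuting class is contained in U^{(9)} \ ({I} ∪ C₁ ∪ … ∪ C₅). -/

import Mathlib

/-!
Up to powers of `ω`, the two-qutrit Pauli operators multiply like the vectors of `(ℤ/3)⁴`, and two
of them commute exactly when the vectors `(m, n, k, l)` of their exponents are orthogonal for the
symplectic form `symp` (`commute_pauli_iff`). A maximal commuting class is therefore the set of
nonzero vectors of a Lagrangian plane, i.e. a line of the generalized quadrangle `W(3)`, which has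
40 points and 40 lines. The claim says that `W(3)` has a maximal partial spread of size 5.

The five planes used are spanned by the pairs `spreadGen i`. They cover 20 of the 40 points and meet
each of the other 35 lines; the latter is checked by evaluation, in the following form: if `a`, `b`
are orthogonal, independent and uncovered, then fewer than 8 uncovered vectors are orthogonal to
both (`card_uncovered_perp_lt`). Since a commuting class of 8 elements contains such a pair and lies
in its orthogonal complement, it cannot avoid the five planes.
-/

open Matrix
open scoped Kronecker

noncomputable section

/-- ω = exp(2πi/p), a primitive p-th root of unity. -/
def omega_p (p : ℕ) : ℂ := Complex.exp (2 * Real.pi * Complex.I / p)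

/-- Generalized Pauli X on ℂ^p : X e_j = e_{j+1}. -/
def genX (p : ℕ) : Matrix (ZMod p) (ZMod p) ℂ :=
  Matrix.of fun i j => if i = j + 1 then 1 else 0

/-- Generalized Pauli Z on ℂ^p : Z e_j = ω^j e_j. -/
def genZ (p : ℕ) : Matrix (ZMod p) (ZMod p) ℂ :=
  Matrix.of fun i j => if i = j then omega_p p ^ j.val else 0

/-- The space of p² × p² complex matrices. -/
abbrev PauliMat (p : ℕ) := Matrix (ZMod p × ZMod p) (ZMod p × ZMod p) ℂ

/-- The set U^{(p²)} of p⁴ two-particle generalized Pauli operators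
    (X^m Z^n) ⊗ (X^k Z^l), with m,n,k,l ∈ {0,…,p−1}. -/
def PauliSet (p : ℕ) [NeZero p] : Set (PauliMat p) :=
  { U | ∃ m n k l : ZMod p,
      U = (genX p ^ m.val * genZ p ^ n.val) ⊗ₖ (genX p ^ k.val * genZ p ^ l.val) }

/-- A maximal commuting class: a subset of U^{(p²)} \ {I} of cardinality p² − 1
    whose elements pairwise commute. -/
def MaxCommClass (p : ℕ) [NeZero p] (C : Set (PauliMat p)) : Prop :=
  C ⊆ PauliSet p \ {1} ∧ C.ncard = p ^ 2 - 1 ∧ ∀ U ∈ C, ∀ V ∈ C, Commute U V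

/-- U ∘ V: the unique element of U^{(p²)} such that U·V is a power of ω times it. -/
def circ (p : ℕ) [NeZero p] (U V : PauliMat p) : PauliMat p :=
  @Classical.epsilon _ ⟨(0 : PauliMat p)⟩
    fun W => W ∈ PauliSet p ∧ ∃ j : ℕ, U * V = omega_p p ^ j • W

/-- U^{∘k}: the unique element of U^{(p²)} such that the matrix power U^k is
    a power of ω times it. -/
def cpow (p : ℕ) [NeZero p] (U : PauliMat p) (k : ZMod p) : PauliMat p :=
  @Classical.epsilon _ ⟨(0 : PauliMat p)⟩
    fun W => W ∈ PauliSet p ∧ ∃ j : ℕ, U ^ k.val = omega_p p ^ j • W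

/-- Independence: U^k is not a scalar multiple of V^l for any (k,l) ≠ (0,0). -/
def Indep (p : ℕ) [NeZero p] (U V : PauliMat p) : Prop :=
  ∀ k l : ZMod p, (k, l) ≠ (0, 0) → ∀ c : ℂ, U ^ k.val ≠ c • V ^ l.val

/-- The class ⟨U,V⟩ generated by a pair of independent commuting operators:
    {U^{∘k} ∘ V^{∘l} : (k,l) ≠ (0,0)}. -/
def genClass (p : ℕ) [NeZero p] (U V : PauliMat p) : Set (PauliMat p) :=
  { W | ∃ k l : ZMod p, (k, l) ≠ (0, 0) ∧ W = circ p (cpow p U k) (cpow p V l) }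

/-- A complete set of p² + 1 pairwise disjoint maximal commuting classes. -/
def CompleteSet (p : ℕ) [NeZero p] (S : Set (Set (PauliMat p))) : Prop :=
  S.ncard = p ^ 2 + 1 ∧ (∀ C ∈ S, MaxCommClass p C) ∧ S.Pairwise Disjoint

/-- A family of classes is unextendible if no maximal commuting class is contained
    in U^{(p²)} \ ({I} ∪ ⋃ F). -/
def Unextendible (p : ℕ) [NeZero p] (F : Set (Set (PauliMat p))) : Prop :=
  ¬ ∃ C : Set (PauliMat p), MaxCommClass p C ∧ C ⊆ PauliSet p \ ({1} ∪ ⋃₀ F)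

/-- The exponents `(m, n, k, l)` of `(X^m Z^n) ⊗ (X^k Z^l)`. -/
abbrev Expo := ZMod 3 × ZMod 3 × ZMod 3 × ZMod 3

/-- The operator `(X^m Z^n) ⊗ (X^k Z^l)` with exponents `v = (m, n, k, l)`. -/
def pauli (v : Expo) : PauliMat 3 :=
  (genX 3 ^ v.1.val * genZ 3 ^ v.2.1.val) ⊗ₖ (genX 3 ^ v.2.2.1.val * genZ 3 ^ v.2.2.2.val)

/-- The symplectic form on exponents measuring non-commutation. -/
def symp (v w : Expo) : ZMod 3 :=
  (v.2.1 * w.1 - v.1 * w.2.1) + (v.2.2.2 * w.2.2.1 - v.2.2.1 * w.2.2.2)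

/-- Spanning pairs of five pairwise disjoint Lagrangian planes. -/
def spreadGen : Fin 5 → Expo × Expo
  | 0 => ((0, 0, 0, 1), (0, 1, 0, 0))
  | 1 => ((0, 0, 1, 0), (1, 0, 0, 0))
  | 2 => ((0, 0, 1, 1), (1, 2, 0, 0))
  | 3 => ((0, 1, 1, 0), (1, 0, 1, 1))
  | 4 => ((0, 1, 2, 0), (1, 0, 2, 2))

/-- The nonzero vectors of the `i`-th plane, described as the orthogonal complement of its spanning
pair (a Lagrangian plane is its own complement). -/
def spreadPlane (i : Fin 5) : Finset Expo :=
  {v | v ≠ 0 ∧ symp (spreadGen i).1 v = 0 ∧ symp (spreadGen i).2 v = 0}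

/-- `v` is nonzero and lies in none of the five planes. -/
def Uncovered (v : Expo) : Prop :=
  v ≠ 0 ∧ ∀ i, ¬ (symp (spreadGen i).1 v = 0 ∧ symp (spreadGen i).2 v = 0)

instance : DecidablePred Uncovered := fun v => by unfold Uncovered; infer_instance

lemma card_spreadPlane (i : Fin 5) : (spreadPlane i).card = 8 := by
  revert i; decide +kernel

lemma symp_spreadPlane :
    ∀ i, ∀ v ∈ spreadPlane i, ∀ w ∈ spreadPlane i, symp v w = 0 := by
  decide +kernel

lemma disjoint_spreadPlane : ∀ i j, i ≠ j → Disjoint (spreadPlane i) (spreadPlane j) := by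
  decide +kernel

/-- No Lagrangian plane avoids all five planes: the plane of two independent orthogonal vectors `a`,
`b` is their common orthogonal complement, and its 8 nonzero vectors are not all uncovered. -/
lemma card_uncovered_perp_lt : ∀ a : Expo, Uncovered a → ∀ b : Expo, Uncovered b →
    (symp a b = 0 ∧ b ≠ a ∧ b ≠ -a) →
    (Finset.univ.filter fun c : Expo => Uncovered c ∧ symp a c = 0 ∧ symp b c = 0).card < 8 := by
  decide +kernel

/-- The additive character `j ↦ ω^j` of `ℤ/3`. -/
local notation "χ" => (ZMod.stdAddChar : AddChar (ZMod 3) ℂ)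

lemma omega_eq : omega_p 3 = χ 1 := by
  have h := ZMod.stdAddChar_coe (N := 3) 1
  simpa [omega_p] using h.symm

lemma chi_ne_zero (j : ZMod 3) : χ j ≠ 0 := (AddChar.val_isUnit χ j).ne_zero

lemma omega_pow_val (j : ZMod 3) : omega_p 3 ^ j.val = χ j := by
  rw [omega_eq, ← AddChar.map_nsmul_eq_pow]
  simp

/-- Entries of `X^m Z^n`: column `j` has the single nonzero entry `ω^(nj)`, in row `j + m`. -/
lemma single_apply (m n i j : ZMod 3) :
    (genX 3 ^ m.val * genZ 3 ^ n.val) i j = if i = j + m then χ (n * j) else 0 := by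
  have hX : ∀ r : ℕ, ∀ i j, (genX 3 ^ r) i j = if i = j + (r : ZMod 3) then 1 else 0 := by
    intro r
    induction r with
    | zero => intro i j; simp [Matrix.one_apply]
    | succ r ih =>
      intro i j
      simp only [pow_succ, Matrix.mul_apply, ih]
      simp [genX, add_comm, add_left_comm]
  have hZ : genZ 3 = Matrix.diagonal fun j => χ j := by
    ext i j
    by_cases h : i = j
    · subst h; simp [genZ, omega_pow_val]
    · simp [genZ, h]
  rw [hZ, Matrix.diagonal_pow, Matrix.mul_diagonal, hX]
  simp [← AddChar.map_nsmul_eq_pow]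

lemma pauli_apply (v : Expo) (i j : ZMod 3 × ZMod 3) :
    pauli v i j = if i = (j.1 + v.1, j.2 + v.2.2.1) then χ (v.2.1 * j.1 + v.2.2.2 * j.2) else 0 := by
  simp only [pauli, Matrix.kroneckerMap_apply, single_apply, AddChar.map_add_eq_mul, Prod.ext_iff]
  by_cases h1 : i.1 = j.1 + v.1 <;> by_cases h2 : i.2 = j.2 + v.2.2.1 <;> simp [h1, h2]

lemma pauli_ne_zero (v : Expo) : pauli v ≠ 0 := by
  intro h
  have := congrFun (congrFun h (v.1, v.2.2.1)) (0, 0)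
  simp [pauli_apply] at this

lemma pauli_zero : pauli 0 = 1 := by
  simp [pauli]

lemma pauli_injective : Function.Injective pauli := by
  intro v w h
  have key : ∀ j : ZMod 3 × ZMod 3, j.1 + v.1 = j.1 + w.1 ∧ j.2 + v.2.2.1 = j.2 + w.2.2.1 ∧
      v.2.1 * j.1 + v.2.2.2 * j.2 = w.2.1 * j.1 + w.2.2.2 * j.2 := by
    intro j
    have h1 := congrFun (congrFun h (j.1 + v.1, j.2 + v.2.2.1)) j
    rw [pauli_apply, pauli_apply, if_pos rfl] at h1
    split_ifs at h1 with h2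
    · exact ⟨congrArg Prod.fst h2, congrArg Prod.snd h2, ZMod.injective_stdAddChar h1⟩
    · exact absurd h1 (chi_ne_zero _)
  have h1 := key (1, 0)
  have h2 := key (0, 1)
  obtain ⟨m, n, k, l⟩ := v
  obtain ⟨m', n', k', l'⟩ := w
  simp_all

/-- The multiplication rule, from `Z X = ω X Z` in each factor. -/
lemma pauli_mul (v w : Expo) :
    pauli v * pauli w = χ (v.2.1 * w.1 + v.2.2.2 * w.2.2.1) • pauli (v + w) := by
  ext i j
  rw [Matrix.mul_apply, Finset.sum_eq_single (j.1 + w.1, j.2 + w.2.2.1)]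
  · simp only [pauli_apply, Matrix.smul_apply, smul_eq_mul, if_true, Prod.fst_add, Prod.snd_add,
      add_assoc, add_comm w.1, add_comm w.2.2.1, ite_mul, mul_ite, zero_mul, mul_zero,
      ← AddChar.map_add_eq_mul]
    congr 2
    ring
  · intro x _ hx
    simp [pauli_apply w, hx]
  · simp

lemma commute_pauli_iff (v w : Expo) : Commute (pauli v) (pauli w) ↔ symp v w = 0 := by
  rw [commute_iff_eq, pauli_mul, pauli_mul, add_comm w v,
    (smul_left_injective ℂ (pauli_ne_zero (v + w))).eq_iff, ZMod.injective_stdAddChar.eq_iff,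
    ← sub_eq_zero, symp]
  ring_nf

lemma pauliSet_eq : PauliSet 3 = Set.range pauli := by
  ext U
  constructor
  · rintro ⟨m, n, k, l, rfl⟩; exact ⟨(m, n, k, l), rfl⟩
  · rintro ⟨v, rfl⟩; exact ⟨_, _, _, _, rfl⟩


/-- There exists an unextendible set of 5 pairwise disjoint maximal
commuting classes of two-qutrit generalized Pauli operators. -/
theorem stmt11 :
    ∃ C : Fin 5 → Set (PauliMat 3),
      (∀ i, MaxCommClass 3 (C i)) ∧
      (∀ i j, i ≠ j → Disjoint (C i) (C j)) ∧
      Unextendible 3 (Set.range C) := by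
  refine ⟨fun i => pauli '' (spreadPlane i : Set Expo), fun i => ⟨?_, ?_, ?_⟩, ?_, ?_⟩
  · rintro _ ⟨v, hv, rfl⟩
    refine ⟨pauliSet_eq ▸ ⟨v, rfl⟩, fun h => ?_⟩
    have hv0 : v = 0 := pauli_injective (h.trans pauli_zero.symm)
    simp [spreadPlane, hv0] at hv
  · rw [Set.ncard_image_of_injective _ pauli_injective, Set.ncard_coe_finset, card_spreadPlane]
    norm_num
  · rintro _ ⟨v, hv, rfl⟩ _ ⟨w, hw, rfl⟩
    exact (commute_pauli_iff v w).2 (symp_spreadPlane i v hv w hw)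
  · intro i j hij
    exact (Set.disjoint_image_iff pauli_injective).2
      (Finset.disjoint_coe.2 (disjoint_spreadPlane i j hij))
  · rintro ⟨C, ⟨hsub, hcard, hcomm⟩, hC⟩
    classical
    let S : Finset Expo := {v | pauli v ∈ C}
    have hmem : ∀ v, v ∈ S ↔ pauli v ∈ C := fun v => by simp [S]
    have hS : S.card = 8 := by
      have himg : pauli '' (S : Set Expo) = C := by
        ext U
        constructor
        · rintro ⟨v, hv, rfl⟩; exact (hmem v).1 hv
        · intro hU
          obtain ⟨v, rfl⟩ := pauliSet_eq ▸ (hsub hU).1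
          exact ⟨v, (hmem v).2 hU, rfl⟩
      rw [← Set.ncard_coe_finset, ← Set.ncard_image_of_injective _ pauli_injective, himg, hcard]
      norm_num
    have hunc : ∀ v ∈ S, Uncovered v := by
      intro v hv
      have h := (hC ((hmem v).1 hv)).2
      have hv0 : v ≠ 0 := by
        rintro rfl
        exact h (Or.inl pauli_zero)
      refine ⟨hv0, fun i hi => h (Or.inr ⟨_, ⟨i, rfl⟩, v, ?_, rfl⟩)⟩
      simp [spreadPlane, hv0, hi]
    have horth : ∀ v ∈ S, ∀ w ∈ S, symp v w = 0 := fun v hv w hw =>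
      (commute_pauli_iff v w).1 (hcomm _ ((hmem v).1 hv) _ ((hmem w).1 hw))
    obtain ⟨a, ha⟩ : S.Nonempty := Finset.card_pos.1 (by omega)
    obtain ⟨b, hb, hb'⟩ : ∃ b ∈ S, b ∉ ({a, -a} : Finset Expo) :=
      Finset.exists_mem_notMem_of_card_lt_card
        (lt_of_le_of_lt Finset.card_le_two (by omega))
    simp only [Finset.mem_insert, Finset.mem_singleton, not_or] at hb'
    have hlt := card_uncovered_perp_lt a (hunc a ha) b (hunc b hb) ⟨horth a ha b hb, hb'⟩
    have hle : S ⊆ Finset.univ.filter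
        fun c : Expo => Uncovered c ∧ symp a c = 0 ∧ symp b c = 0 := fun c hc => by
      simpa using ⟨hunc c hc, horth a ha c hc, horth b hb c hc⟩
    have := Finset.card_le_card hle
    omega
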